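/- Let H be an atomic cancellative monoid and let q be an atom of H. Then q is almost prime-like with respect to ∣_p if and only if for every a ∈ H the following holds: if some factorization of a into atoms (a ≃ u_1⋯u_k with atoms u_i) contains an atom associated to q, then every factorization of a into atoms contains an atom associated to q. -/

import Mathlib

def MAtom {H : Type*} [Monoid H] (u : H) : Prop :=
  ¬ IsUnit u ∧ ∀ a b : H, u = a * b → IsUnit a ∨ IsUnit b

def TAssoc {H : Type*} [Monoid H] (a b : H) : Prop :=
  ∃ ε η : Hˣ, b = (ε : H) * a * (η : H)

def Atomic (H : Type*) [Monoid H] : Prop :=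
  ∀ a : H, ¬ IsUnit a → ∃ l : List H, l ≠ [] ∧ (∀ u ∈ l, MAtom u) ∧ a = l.prod

def T1Cond {H T : Type*} [Monoid H] [Monoid T] (φ : H →* T) : Prop :=
  (∀ t : T, ∃ (ε η : Tˣ) (a : H), t = (ε : T) * φ a * (η : T)) ∧
    ∀ a : H, IsUnit (φ a) ↔ IsUnit a

def IsTransferHom {H T : Type*} [Monoid H] [Monoid T] (φ : H →* T) : Prop :=
  T1Cond φ ∧
    ∀ (a : H) (b₁ b₂ : T), φ a = b₁ * b₂ →
      ∃ (a₁ a₂ : H) (ε : Tˣ), a = a₁ * a₂ ∧ φ a₁ = b₁ * ((ε⁻¹ : Tˣ) : T) ∧ φ a₂ = (ε : T) * b₂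

def IsWeakTransferHom {H T : Type*} [Monoid H] [Monoid T] (φ : H →* T) : Prop :=
  T1Cond φ ∧
    ∀ (a : H) (n : ℕ), 0 < n → ∀ v : Fin n → T, (∀ i, MAtom (v i)) →
      φ a = (List.ofFn v).prod →
      ∃ (u : Fin n → H) (σ : Equiv.Perm (Fin n)),
        (∀ i, MAtom (u i)) ∧ a = (List.ofFn u).prod ∧ ∀ i, TAssoc (φ (u i)) (v (σ i))

def IsIsoatomic {H T : Type*} [Monoid H] [Monoid T] (φ : H →* T) : Prop :=
  ∀ u v : H, MAtom u → MAtom v → TAssoc (φ u) (φ v) → TAssoc u v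

def lengthsOf {H : Type*} [Monoid H] (a : H) : Set ℕ :=
  {n | (n = 0 ∧ IsUnit a) ∨
    ∃ l : List H, l ≠ [] ∧ (∀ u ∈ l, MAtom u) ∧ a = l.prod ∧ l.length = n}
/-- Divisibility up to permutation: `a ∣_p b`. -/
def dvdP {H : Type*} [Monoid H] (a b : H) : Prop :=
  ∃ (k l : ℕ) (u : Fin k → H) (v : Fin l → H),
    (∀ i, MAtom (u i)) ∧ (∀ j, MAtom (v j)) ∧
    TAssoc a (List.ofFn u).prod ∧ TAssoc b (List.ofFn v).prod ∧
    ∃ σ : Fin k ↪ Fin l, ∀ i, TAssoc (u i) (v (σ i))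

/-- An almost prime-like element (with respect to `∣_p`). -/
def APLike {H : Type*} [Monoid H] (q : H) : Prop :=
  ¬ IsUnit q ∧ ∀ a b : H, dvdP q (a * b) → dvdP q a ∨ dvdP q b

/-- The number of entries of `l` associated to `q`. -/
noncomputable def countAssoc {H : Type*} [Monoid H] (l : List H) (q : H) : ℕ :=
  Nat.card {i : Fin l.length // TAssoc (l.get i) q}

/-- The `q`-adic valuation of `a`: the set of numbers of occurrences (up to associativity)
of `q` in factorizations of `a` into atoms. -/
def Vq {H : Type*} [Monoid H] (q a : H) : Set ℕ :=
  {n | ∃ l : List H, (∀ u ∈ l, MAtom u) ∧ TAssoc a l.prod ∧ countAssoc l q = n}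

/-- A prime-like element: almost prime-like, with singleton `q`-adic valuations. -/
def PrimeLike {H : Type*} [Monoid H] (q : H) : Prop :=
  APLike q ∧ ∀ a : H, ∃ n : ℕ, Vq q a = {n}

/-- `H` is permutably factorial. -/
def PermutablyFactorial (H : Type*) [Monoid H] : Prop :=
  Atomic H ∧
    ∀ (k l : ℕ) (u : Fin k → H) (v : Fin l → H),
      (∀ i, MAtom (u i)) → (∀ j, MAtom (v j)) →
      (List.ofFn u).prod = (List.ofFn v).prod →
      ∃ σ : Fin k ≃ Fin l, ∀ i, TAssoc (u i) (v (σ i))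

theorem TAssoc.rfl' {H : Type*} [Monoid H] (a : H) : TAssoc a a := ⟨1, 1, by simp⟩

theorem TAssoc.symm' {H : Type*} [Monoid H] {a b : H} (h : TAssoc a b) : TAssoc b a := by
  obtain ⟨e, f, rfl⟩ := h
  exact ⟨e⁻¹, f⁻¹, by simp [mul_assoc]⟩

theorem TAssoc.trans' {H : Type*} [Monoid H] {a b c : H} (h : TAssoc a b) (h' : TAssoc b c) :
    TAssoc a c := by
  obtain ⟨e, f, rfl⟩ := h
  obtain ⟨e', f', rfl⟩ := h'
  exact ⟨e' * e, f * f', by simp [mul_assoc]⟩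

theorem isUnit_both {H : Type*} [CancelMonoid H] {a b : H} (h : IsUnit (a * b)) :
    IsUnit a ∧ IsUnit b := by
  obtain ⟨u, hu⟩ := h
  have h1 : a * (b * ((u⁻¹ : Hˣ) : H)) = 1 := by rw [← mul_assoc, ← hu]; simp
  have h2 : (b * ((u⁻¹ : Hˣ) : H)) * a = 1 := by
    apply mul_left_cancel (a := a)
    rw [← mul_assoc, h1]; simp
  have ha : IsUnit a := ⟨⟨a, _, h1, h2⟩, rfl⟩
  refine ⟨ha, ?_⟩
  obtain ⟨v, rfl⟩ := ha
  exact ⟨v⁻¹ * u, by simp [hu]⟩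

theorem TAssoc.isUnit_iff' {H : Type*} [Monoid H] {a b : H} (h : TAssoc a b) :
    IsUnit a ↔ IsUnit b := by
  obtain ⟨e, f, rfl⟩ := h
  simp

theorem MAtom.of_assoc {H : Type*} [Monoid H] {a b : H} (ha : MAtom a) (h : TAssoc a b) :
    MAtom b := by
  refine ⟨fun hb => ha.1 (h.isUnit_iff'.2 hb), fun x y hxy => ?_⟩
  obtain ⟨e, f, rfl⟩ := h.symm'
  have := ha.2 (e * x) (y * f) (by rw [hxy]; simp [mul_assoc])
  simpa using this

theorem unit_list {H : Type*} [CancelMonoid H] {l : List H} (hl : ∀ u ∈ l, MAtom u)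
    (h : IsUnit l.prod) : l = [] := by
  cases l with
  | nil => rfl
  | cons x t =>
    rw [List.prod_cons] at h
    exact absurd (isUnit_both h).1 (hl x (by simp)).1

theorem atom_list {H : Type*} [CancelMonoid H] {l : List H} (hl : ∀ u ∈ l, MAtom u)
    (h : MAtom l.prod) : ∃ x, l = [x] := by
  cases l with
  | nil => exact absurd (by simp) h.1
  | cons x t =>
    rcases h.2 x t.prod List.prod_cons with h1 | h1
    · exact absurd h1 (hl x (by simp)).1
    · exact ⟨x, by rw [unit_list (fun u hu => hl u (by simp [hu])) h1]⟩

theorem dvdP_atom {H : Type*} [CancelMonoid H] {q b : H} (hq : MAtom q) :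
    dvdP q b ↔ ∃ l : List H, (∀ u ∈ l, MAtom u) ∧ TAssoc b l.prod ∧ ∃ u ∈ l, TAssoc q u := by
  constructor
  · rintro ⟨k, n, u, v, hu, hv, hqu, hbv, σ, hσ⟩
    obtain ⟨x, hx⟩ := atom_list (l := List.ofFn u)
      (by intro y hy; obtain ⟨i, rfl⟩ := (List.mem_ofFn' _ _).1 hy; exact hu i)
      (hq.of_assoc hqu)
    have hxm : x ∈ List.ofFn u := by simp [hx]
    obtain ⟨i, hi⟩ := (List.mem_ofFn' _ _).1 hxm
    refine ⟨List.ofFn v, ?_, hbv, v (σ i), (List.mem_ofFn' _ _).2 ⟨_, rfl⟩, ?_⟩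
    · intro y hy; obtain ⟨i, rfl⟩ := (List.mem_ofFn' _ _).1 hy; exact hv i
    · rw [hx, List.prod_singleton, ← hi] at hqu
      exact hqu.trans' (hσ i)
  · rintro ⟨l, hl, hb, u, hu, hqu⟩
    obtain ⟨i, rfl⟩ := List.get_of_mem hu
    refine ⟨1, l.length, fun _ => q, l.get, fun _ => hq, fun j => hl _ (List.get_mem _ _), ?_, ?_,
      ⟨fun _ => i, fun _ _ _ => Subsingleton.elim _ _⟩, fun _ => hqu⟩
    · simpa using TAssoc.rfl' q
    · rw [List.ofFn_get]; exact hb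

/-- An atom `q` is almost prime-like (w.r.t. `∣_p`) iff whenever some
factorization of an element `a` into atoms contains an atom associated to `q`, then
every factorization of `a` into atoms contains an atom associated to `q`. -/
theorem aplike_iff_occurs_in_all_factorizations {H : Type*} [CancelMonoid H]
    (hH : Atomic H) (q : H) (hq : MAtom q) :
    APLike q ↔
      ∀ (a : H) (l l' : List H), (∀ u ∈ l, MAtom u) → (∀ u ∈ l', MAtom u) →
        TAssoc a l.prod → TAssoc a l'.prod →
        (∃ u ∈ l, TAssoc q u) → ∃ u ∈ l', TAssoc q u := by
  constructor
  · intro hap a l l' hl hl' hal hal' hex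
    have key : ∀ m : List H, (∀ u ∈ m, MAtom u) → dvdP q m.prod → ∃ u ∈ m, TAssoc q u := by
      intro m
      induction m with
      | nil =>
        intro _ h
        obtain ⟨t, ht, h1, u, hu, _⟩ := (dvdP_atom hq).1 h
        rw [unit_list ht (h1.isUnit_iff'.1 (by simp))] at hu
        simp at hu
      | cons x t ih =>
        intro hm h
        rw [List.prod_cons] at h
        rcases hap.2 _ _ h with h | h
        · obtain ⟨s, hs, h1, u, hu, hqu⟩ := (dvdP_atom hq).1 h
          obtain ⟨y, rfl⟩ := atom_list hs ((hm x (by simp)).of_assoc h1)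
          rw [List.mem_singleton] at hu
          subst hu
          rw [List.prod_singleton] at h1
          exact ⟨x, by simp, hqu.trans' h1.symm'⟩
        · obtain ⟨u, hu, hqu⟩ := ih (fun u hu => hm u (by simp [hu])) h
          exact ⟨u, by simp [hu], hqu⟩
    exact key l' hl' ((dvdP_atom hq).2 ⟨l, hl, hal'.symm'.trans' hal, hex⟩)
  · intro h
    refine ⟨hq.1, fun a b hab => ?_⟩
    obtain ⟨l, hl, hal, hex⟩ := (dvdP_atom hq).1 hab
    by_cases ha : IsUnit a
    · right
      obtain ⟨e, rfl⟩ := ha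
      exact (dvdP_atom hq).2 ⟨l, hl, TAssoc.trans' ⟨e, 1, by simp⟩ hal, hex⟩
    by_cases hb : IsUnit b
    · left
      obtain ⟨e, rfl⟩ := hb
      exact (dvdP_atom hq).2 ⟨l, hl, TAssoc.trans' ⟨1, e, by simp⟩ hal, hex⟩
    obtain ⟨la, -, hla, rfl⟩ := hH a ha
    obtain ⟨lb, -, hlb, rfl⟩ := hH b hb
    obtain ⟨u, hu, hqu⟩ := h _ l (la ++ lb) hl
      (fun u hu => (List.mem_append.1 hu).elim (hla u) (hlb u)) hal
      (by rw [List.prod_append]; exact TAssoc.rfl' _) hex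
    rcases List.mem_append.1 hu with hu | hu
    · exact Or.inl ((dvdP_atom hq).2 ⟨la, hla, TAssoc.rfl' _, u, hu, hqu⟩)
    · exact Or.inr ((dvdP_atom hq).2 ⟨lb, hlb, TAssoc.rfl' _, u, hu, hqu⟩)
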